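/- Fix an integer m ≥ 1. Let d_n be the unique positive solution of Σ_{j=1}^∞ j·e^{−jd}/(1 − e^{−jd}) = n and set δ_n = d_n^{4/3}/log n. Then, as n → ∞, the central integral J₁(m,n) = (e^{n d_n}/(2π))·∫_{−δ_n}^{δ_n} g(e^{−d_n + iθ})·F_m(e^{−d_n + iθ})·e^{−iθn} dθ satisfies J₁(m,n) ∼ p(n)·(n/ζ(2))^{(m+1)/2}·m!·ζ(m+1). -/

import Mathlib

open Filter Asymptotics Topology

/-- `aFun d = Σ_{j≥1} j·e^{−jd}/(1 − e^{−jd})`. -/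
noncomputable def aFun (d : ℝ) : ℝ :=
  ∑' j : ℕ, (j + 1 : ℝ) * Real.exp (-(j + 1) * d) / (1 - Real.exp (-(j + 1) * d))

/-- `gC x = ∏_{j≥1} (1 − x^j)⁻¹` (complex Euler product), for `|x| < 1`. -/
noncomputable def gC (x : ℂ) : ℂ := ∏' j : ℕ, (1 - x ^ (j + 1))⁻¹

/-- `FC m x = Σ_{j≥1} j^m x^j/(1 − x^j)`, for `|x| < 1`. -/
noncomputable def FC (m : ℕ) (x : ℂ) : ℂ :=
  ∑' j : ℕ, (j + 1 : ℂ) ^ m * x ^ (j + 1) / (1 - x ^ (j + 1))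

/-! Expand `log g(x) = Σ σ₁(n) xⁿ / n` at `x = e^{-d + iθ}`. The choice of `d = d_n` makes the
linear term in `θ` cancel `e^{-iθn}`; the quadratic coefficient is asymptotic to `ζ(2) / d³` and the
cubic one is `O(d⁻⁴)`, so at the scale `θ = t d^{3/2}` the integrand converges to `e^{-ζ(2) t²}`.
Since `σ₁(n) ≥ n`, the real part of the exponent is dominated by that of a geometric series, and the
resulting integrable bound `O(1 / (1 + t²))` holds for all `|θ| ≤ π`. Dominated convergence thus
applies to any window `|θ| ≤ η` with `d^{3/2} ≪ η ≤ π`.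

On the Gaussian scale `d^{m+1} F_m` converges to the constant `m! ζ(m+1)`, so the central integral
is equivalent to `d^{-(m+1)} m! ζ(m+1)` times the same integral without `F_m`. The latter, taken
over the full circle, is exactly `p(n)` by Cauchy's formula; hence no asymptotic formula for `p(n)`
is needed. Finally `n d² → ζ(2)` turns `d^{-(m+1)}` into `(n / ζ(2))^{(m+1)/2}`. -/

open scoped ArithmeticFunction.sigma Nat Real

section PowerGeometricSeries

/-- The power moments `Σ_n n ^ a e^{-sn}` of the geometric distribution, which govern all the
divisor sums below as `s → 0`. -/
noncomputable def expMoment (a : ℕ) (s : ℝ) : ℝ := ∑' n : ℕ, (n : ℝ) ^ a * Real.exp (-s) ^ n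

lemma le_tsum_pow_mul_geometric (a : ℕ) {r : ℝ} (hr₀ : 0 ≤ r) (hr₁ : r < 1) :
    a ! * r ^ a / (1 - r) ^ (a + 1) ≤ ∑' n : ℕ, (n : ℝ) ^ a * r ^ n := by
  have hr : ‖r‖ < 1 := by rwa [Real.norm_of_nonneg hr₀]
  have hchoose := (hasSum_choose_mul_geometric_of_norm_lt_one a hr).mul_left (a ! * r ^ a)
  have hle_pow (n : ℕ) : a ! * ((n + a).choose a : ℝ) ≤ ((n + a : ℕ) : ℝ) ^ a := by
    have := Nat.descFactorial_le_pow (n + a) a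
    rw [Nat.descFactorial_eq_factorial_mul_choose] at this
    exact_mod_cast this
  rw [← mul_one_div, ← hchoose.tsum_eq]
  refine hchoose.summable.tsum_le_tsum_of_inj (· + a) (add_left_injective a)
    (fun n _ ↦ by positivity) (fun n ↦ ?_) (summable_pow_mul_geometric_of_norm_lt_one a hr)
  calc a ! * r ^ a * ((n + a).choose a * r ^ n)
      = a ! * (n + a).choose a * r ^ (n + a) := by ring
    _ ≤ ((n + a : ℕ) : ℝ) ^ a * r ^ (n + a) := by gcongr; exact hle_pow n

lemma tsum_pow_mul_geometric_le {a : ℕ} (ha : a ≠ 0) {r : ℝ} (hr₀ : 0 ≤ r) (hr₁ : r < 1) :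
    ∑' n : ℕ, (n : ℝ) ^ a * r ^ n ≤ a ! * r / (1 - r) ^ (a + 1) := by
  have hr : ‖r‖ < 1 := by rwa [Real.norm_of_nonneg hr₀]
  have hsum := summable_pow_mul_geometric_of_norm_lt_one a hr
  have hchoose := (hasSum_choose_mul_geometric_of_norm_lt_one a hr).mul_left (a ! * r)
  have hpow_le (n : ℕ) : ((n + 1 : ℕ) : ℝ) ^ a ≤ a ! * (n + a).choose a := by
    have := Nat.pow_succ_le_ascFactorial (n + 1) a
    rw [Nat.ascFactorial_eq_factorial_mul_choose] at this
    exact_mod_cast this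
  calc ∑' n : ℕ, (n : ℝ) ^ a * r ^ n
      = ∑' n : ℕ, ((n + 1 : ℕ) : ℝ) ^ a * r ^ (n + 1) := by
        simp [hsum.tsum_eq_zero_add, ha]
    _ ≤ ∑' n : ℕ, a ! * r * ((n + a).choose a * r ^ n) := by
        refine Summable.tsum_le_tsum (fun n ↦ ?_) ((summable_nat_add_iff 1).2 hsum)
          hchoose.summable
        calc ((n + 1 : ℕ) : ℝ) ^ a * r ^ (n + 1)
            ≤ a ! * (n + a).choose a * r ^ (n + 1) := by gcongr; exact hpow_le n
          _ = a ! * r * ((n + a).choose a * r ^ n) := by ring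
    _ = a ! * r / (1 - r) ^ (a + 1) := by rw [hchoose.tsum_eq, mul_one_div]

lemma div_one_sub_exp_neg_le {s : ℝ} (hs : 0 < s) : s / (1 - Real.exp (-s)) ≤ 1 + s := by
  have hpos : 0 < 1 - Real.exp (-s) := by simpa using hs
  have hmul : Real.exp s * Real.exp (-s) = 1 := by rw [← Real.exp_add]; simp
  rw [div_le_iff₀ hpos]
  nlinarith [Real.add_one_le_exp s, Real.exp_pos (-s)]

lemma one_le_div_one_sub_exp_neg {s : ℝ} (hs : 0 < s) : 1 ≤ s / (1 - Real.exp (-s)) := by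
  have hpos : 0 < 1 - Real.exp (-s) := by simpa using hs
  rw [one_le_div hpos]
  linarith [Real.add_one_le_exp (-s)]

lemma tendsto_div_one_sub_exp_neg :
    Tendsto (fun s : ℝ ↦ s / (1 - Real.exp (-s))) (𝓝[>] 0) (𝓝 1) := by
  have hupper : Tendsto (fun s : ℝ ↦ 1 + s) (𝓝[>] 0) (𝓝 1) :=
    tendsto_nhdsWithin_of_tendsto_nhds (Continuous.tendsto' (by fun_prop) 0 1 (add_zero 1))
  refine tendsto_of_tendsto_of_tendsto_of_le_of_le' tendsto_const_nhds hupper ?_ ?_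
  · filter_upwards [self_mem_nhdsWithin] with s hs using one_le_div_one_sub_exp_neg hs
  · filter_upwards [self_mem_nhdsWithin] with s hs using div_one_sub_exp_neg_le hs

variable {a : ℕ} {s : ℝ}

lemma expMoment_nonneg : 0 ≤ expMoment a s := tsum_nonneg fun n ↦ by positivity

lemma pow_mul_expMoment_le (ha : a ≠ 0) (hs : 0 < s) :
    s ^ (a + 1) * expMoment a s ≤ a ! * ((s / (1 - Real.exp (-s))) ^ (a + 1) * Real.exp (-s)) :=
  calc s ^ (a + 1) * expMoment a s
      ≤ s ^ (a + 1) * (a ! * Real.exp (-s) / (1 - Real.exp (-s)) ^ (a + 1)) := by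
        gcongr
        exact tsum_pow_mul_geometric_le ha (Real.exp_pos _).le (by simpa using hs)
    _ = a ! * ((s / (1 - Real.exp (-s))) ^ (a + 1) * Real.exp (-s)) := by rw [div_pow]; ring

lemma le_pow_mul_expMoment (hs : 0 < s) :
    a ! * ((s / (1 - Real.exp (-s))) ^ (a + 1) * Real.exp (-s) ^ a) ≤ s ^ (a + 1) * expMoment a s :=
  calc a ! * ((s / (1 - Real.exp (-s))) ^ (a + 1) * Real.exp (-s) ^ a)
      = s ^ (a + 1) * (a ! * Real.exp (-s) ^ a / (1 - Real.exp (-s)) ^ (a + 1)) := by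
        rw [div_pow]; ring
    _ ≤ s ^ (a + 1) * expMoment a s := by
        gcongr
        exact le_tsum_pow_mul_geometric a (Real.exp_pos _).le (by simpa using hs)

lemma pow_mul_expMoment_le_const (ha : a ≠ 0) (hs : 0 < s) :
    s ^ (a + 1) * expMoment a s ≤ a ! * ((a + 1)! * Real.exp 1) := by
  have hpow : (1 + s) ^ (a + 1) ≤ (a + 1)! * Real.exp (1 + s) := by
    rw [← div_le_iff₀' (by positivity)]
    exact Real.pow_div_factorial_le_exp (1 + s) (by positivity) (a + 1)
  have hpos : 0 < 1 - Real.exp (-s) := by simpa using hs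
  calc s ^ (a + 1) * expMoment a s
      ≤ a ! * ((s / (1 - Real.exp (-s))) ^ (a + 1) * Real.exp (-s)) := pow_mul_expMoment_le ha hs
    _ ≤ a ! * ((1 + s) ^ (a + 1) * Real.exp (-s)) := by gcongr; exact div_one_sub_exp_neg_le hs
    _ ≤ a ! * ((a + 1)! * Real.exp (1 + s) * Real.exp (-s)) := by gcongr
    _ = a ! * ((a + 1)! * Real.exp 1) := by
        rw [mul_assoc ((a + 1)! : ℝ), ← Real.exp_add, add_neg_cancel_right]

lemma tendsto_pow_mul_expMoment (ha : a ≠ 0) :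
    Tendsto (fun s : ℝ ↦ s ^ (a + 1) * expMoment a s) (𝓝[>] 0) (𝓝 (a ! : ℝ)) := by
  have hexp : Tendsto (fun s : ℝ ↦ Real.exp (-s)) (𝓝[>] 0) (𝓝 1) :=
    tendsto_nhdsWithin_of_tendsto_nhds (Continuous.tendsto' (by fun_prop) 0 1 (by simp))
  have hratio := tendsto_div_one_sub_exp_neg.pow (a + 1)
  refine tendsto_of_tendsto_of_tendsto_of_le_of_le'
    (by simpa using (hratio.mul (hexp.pow a)).const_mul (a ! : ℝ))
    (by simpa using (hratio.mul hexp).const_mul (a ! : ℝ)) ?_ ?_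
  · filter_upwards [self_mem_nhdsWithin] with s hs using le_pow_mul_expMoment hs
  · filter_upwards [self_mem_nhdsWithin] with s hs using pow_mul_expMoment_le ha hs

end PowerGeometricSeries

section DivisorSums

variable {𝕜 : Type*} [RCLike 𝕜]

lemma sum_divisorsAntidiagonal_pow_mul (m n : ℕ) (c : ℕ → 𝕜) :
    ∑ p ∈ n.divisorsAntidiagonal, (p.1 : 𝕜) ^ m * c (p.1 * p.2) = σ m n * c n := by
  calc ∑ p ∈ n.divisorsAntidiagonal, (p.1 : 𝕜) ^ m * c (p.1 * p.2)
      = ∑ p ∈ n.divisorsAntidiagonal, (p.1 : 𝕜) ^ m * c n :=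
        Finset.sum_congr rfl fun p hp ↦ by rw [(Nat.mem_divisorsAntidiagonal.1 hp).1]
    _ = σ m n * c n := by
        rw [← Finset.sum_mul, Nat.sum_divisorsAntidiagonal (fun i _ ↦ (i : 𝕜) ^ m),
          ArithmeticFunction.sigma_apply]
        push_cast
        rfl

lemma summable_sigma_pow_mul {m : ℕ} {c : ℕ → 𝕜} (hc : Summable fun n ↦ (σ m n : ℝ) * ‖c n‖) :
    Summable fun q : Σ n : ℕ+, (n : ℕ).divisorsAntidiagonal ↦
      (q.2.1.1 : 𝕜) ^ m * c (q.2.1.1 * q.2.1.2) := by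
  refine .of_norm ((summable_sigma_of_nonneg fun _ ↦ norm_nonneg _).2
    ⟨fun n ↦ (hasSum_fintype _).summable, ?_⟩)
  refine (hc.comp_injective PNat.coe_injective).congr fun n ↦ ?_
  rw [tsum_fintype, Finset.univ_eq_attach,
    (n : ℕ).divisorsAntidiagonal.sum_attach fun p ↦ ‖(p.1 : 𝕜) ^ m * c (p.1 * p.2)‖]
  simpa using (sum_divisorsAntidiagonal_pow_mul m n fun k ↦ ‖c k‖).symm

lemma hasSum_prod_pow_mul {m : ℕ} {c : ℕ → 𝕜} (hc : Summable fun n ↦ (σ m n : ℝ) * ‖c n‖) :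
    HasSum (fun p : ℕ+ × ℕ+ ↦ (p.1 : 𝕜) ^ m * c (p.1 * p.2)) (∑' n, σ m n * c n) := by
  have hsummable := summable_sigma_pow_mul hc
  refine sigmaAntidiagonalEquivProd.hasSum_iff.1 ?_
  convert! hsummable.hasSum using 1
  rw [hsummable.tsum_sigma, ← tsum_pnat_eq_tsum_of_eq_zero (by simp)]
  refine tsum_congr fun n ↦ ?_
  rw [tsum_fintype, Finset.univ_eq_attach,
    (n : ℕ).divisorsAntidiagonal.sum_attach fun p ↦ (p.1 : 𝕜) ^ m * c (p.1 * p.2),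
    sum_divisorsAntidiagonal_pow_mul]

lemma tsum_pow_div_one_sub_eq_tsum_nat_sigma (m : ℕ) {x : 𝕜} (hx : ‖x‖ < 1) :
    ∑' j : ℕ, (j + 1 : 𝕜) ^ m * x ^ (j + 1) / (1 - x ^ (j + 1)) = ∑' n : ℕ, σ m n * x ^ n := by
  rw [← tsum_pnat_eq_tsum_of_eq_zero (f := fun n : ℕ ↦ σ m n * x ^ n) (by simp),
    ← tsum_pow_div_one_sub_eq_tsum_sigma hx m,
    tsum_pnat_eq_tsum_succ (f := fun n : ℕ ↦ (n : 𝕜) ^ m * x ^ n / (1 - x ^ n))]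
  simp

end DivisorSums

section SigmaMoment

/-- The weighted divisor sums `Σ_n σ_m(n) n ^ b e^{-sn}`: up to sign, the `b`-th derivatives of
`s ↦ F_m(e^{-s})`. -/
noncomputable def sigmaMoment (m b : ℕ) (s : ℝ) : ℝ :=
  ∑' n : ℕ, (σ m n : ℝ) * ((n : ℝ) ^ b * Real.exp (-s) ^ n)

variable {m : ℕ} {s : ℝ}

lemma summable_sigma_mul_pow_mul_geometric (m b : ℕ) {r : ℝ} (hr₀ : 0 ≤ r) (hr₁ : r < 1) :
    Summable fun n : ℕ ↦ (σ m n : ℝ) * ((n : ℝ) ^ b * r ^ n) := by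
  refine .of_nonneg_of_le (fun n ↦ by positivity) (fun n ↦ ?_)
    (summable_pow_mul_geometric_of_norm_lt_one (m + 1 + b) (by rwa [Real.norm_of_nonneg hr₀]))
  have hσ : (σ m n : ℝ) ≤ (n : ℝ) ^ (m + 1) :=
    mod_cast ArithmeticFunction.sigma_le_pow_succ m n
  calc (σ m n : ℝ) * ((n : ℝ) ^ b * r ^ n) ≤ (n : ℝ) ^ (m + 1) * ((n : ℝ) ^ b * r ^ n) := by gcongr
    _ = (n : ℝ) ^ (m + 1 + b) * r ^ n := by ring

lemma summable_sigmaMoment (m b : ℕ) (hs : 0 < s) :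
    Summable fun n : ℕ ↦ (σ m n : ℝ) * ((n : ℝ) ^ b * Real.exp (-s) ^ n) :=
  summable_sigma_mul_pow_mul_geometric m b (Real.exp_pos _).le (by simpa using hs)

lemma sigmaMoment_antitoneOn (m b : ℕ) : AntitoneOn (sigmaMoment m b) (Set.Ioi 0) :=
  fun s hs t ht hst ↦ (summable_sigmaMoment m b ht).tsum_le_tsum
    (fun n ↦ by gcongr) (summable_sigmaMoment m b hs)

lemma aFun_eq_sigmaMoment (hs : 0 < s) : aFun s = sigmaMoment 1 0 s := by
  have hx : ‖Real.exp (-s)‖ < 1 := by simpa using hs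
  have hexp (j : ℕ) : Real.exp (-s) ^ (j + 1) = Real.exp (-(j + 1) * s) := by
    rw [← Real.exp_nat_mul]; push_cast; ring_nf
  simpa [hexp, aFun, sigmaMoment] using tsum_pow_div_one_sub_eq_tsum_nat_sigma 1 hx

lemma hasSum_expMoment_sigmaMoment {b : ℕ} (hmb : m + b ≠ 0) (hs : 0 < s) :
    HasSum (fun k : ℕ ↦ (k + 1 : ℝ) ^ b * expMoment (m + b) ((k + 1) * s))
      (sigmaMoment m b s) := by
  have hsum : Summable fun n : ℕ ↦ (σ m n : ℝ) * ‖(n : ℝ) ^ b * Real.exp (-s) ^ n‖ := by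
    simpa using summable_sigmaMoment m b hs
  have hpairs := (Equiv.prodComm ℕ+ ℕ+).hasSum_iff.2 (hasSum_prod_pow_mul hsum)
  have hrow (k : ℕ+) : HasSum (fun j : ℕ+ ↦ (j : ℝ) ^ m *
      (((j * k : ℕ) : ℝ) ^ b * Real.exp (-s) ^ (j * k : ℕ)))
      ((k : ℝ) ^ b * expMoment (m + b) (k * s)) := by
    have hks : ‖Real.exp (-(k * s))‖ < 1 := by simpa using hs
    have hgeom := (summable_pow_mul_geometric_of_norm_lt_one (m + b) hks).hasSum.mul_left
      ((k : ℝ) ^ b)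
    refine ((hasSum_pnat_iff
      (f := fun j : ℕ ↦ (k : ℝ) ^ b * ((j : ℝ) ^ (m + b) * Real.exp (-(k * s)) ^ j))).2
      (by simpa [zero_pow hmb, expMoment] using hgeom)).congr_fun fun j ↦ ?_
    have hexp : Real.exp (-s) ^ (j * k : ℕ) = Real.exp (-(k * s)) ^ (j : ℕ) := by
      rw [mul_comm, pow_mul, ← Real.exp_nat_mul, mul_neg]
    rw [hexp]
    push_cast
    ring
  simpa [sigmaMoment] using (hasSum_pnat_iff_hasSum_succ
    (f := fun k : ℕ ↦ (k : ℝ) ^ b * expMoment (m + b) (k * s))).1 (hpairs.prod_fiberwise hrow)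

lemma summable_one_div_succ_pow (hm : m ≠ 0) :
    Summable fun k : ℕ ↦ 1 / (k + 1 : ℝ) ^ (m + 1) := by
  simpa using (summable_nat_add_iff 1).2 (Real.summable_one_div_nat_pow.2 (by omega : 1 < m + 1))

theorem tendsto_pow_mul_sigmaMoment (hm : m ≠ 0) (b : ℕ) :
    Tendsto (fun s : ℝ ↦ s ^ (m + b + 1) * sigmaMoment m b s) (𝓝[>] 0)
      (𝓝 ((m + b)! * ∑' k : ℕ, 1 / (k + 1 : ℝ) ^ (m + 1))) := by
  have hmb : m + b ≠ 0 := by omega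
  let term (s : ℝ) (k : ℕ) : ℝ :=
    ((k + 1) * s) ^ (m + b + 1) * expMoment (m + b) ((k + 1) * s) * (1 / (k + 1 : ℝ) ^ (m + 1))
  have hterm : (fun s ↦ s ^ (m + b + 1) * sigmaMoment m b s) =ᶠ[𝓝[>] 0] fun s ↦ ∑' k, term s k := by
    filter_upwards [self_mem_nhdsWithin] with s hs
    rw [← (hasSum_expMoment_sigmaMoment hmb hs).tsum_eq, ← tsum_mul_left]
    exact tsum_congr fun k ↦ by simp only [term, mul_pow]; field_simp; ring
  have hscale (k : ℕ) : Tendsto (fun s : ℝ ↦ (k + 1) * s) (𝓝[>] 0) (𝓝[>] 0) :=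
    tendsto_nhdsWithin_iff.2 ⟨tendsto_nhdsWithin_of_tendsto_nhds
      (Continuous.tendsto' (by fun_prop) 0 0 (mul_zero _)),
      by filter_upwards [self_mem_nhdsWithin] with s hs using
        mul_pos (by positivity : (0 : ℝ) < k + 1) hs⟩
  rw [← tsum_mul_left]
  refine (tendsto_tsum_of_dominated_convergence
    ((summable_one_div_succ_pow hm).mul_left ((m + b)! * ((m + b + 1)! * Real.exp 1))) (fun k ↦
      ((tendsto_pow_mul_expMoment hmb).comp (hscale k)).mul_const _) ?_).congr' hterm.symm
  filter_upwards [self_mem_nhdsWithin] with s (hs : 0 < s) k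
  have hks : 0 < (k + 1) * s := by positivity
  have hnonneg := expMoment_nonneg (a := m + b) (s := (k + 1) * s)
  rw [Function.comp_apply, Real.norm_of_nonneg (by positivity)]
  exact mul_le_mul_of_nonneg_right (pow_mul_expMoment_le_const hmb hks) (by positivity)

end SigmaMoment

section EulerProduct

/-- The branch `Σ_n σ_1(n) x ^ n / n` of `log g(x)` on the unit disc that vanishes at `0`. -/
noncomputable def eulerLog (x : ℂ) : ℂ := ∑' n : ℕ, σ 1 n * (x ^ n / n)

variable {x : ℂ}

lemma summable_sigma_one_mul_pow_div (hx : ‖x‖ < 1) :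
    Summable fun n : ℕ ↦ (σ 1 n : ℝ) * ‖x ^ n / n‖ := by
  refine .of_nonneg_of_le (fun n ↦ by positivity) (fun n ↦ ?_)
    (summable_sigma_mul_pow_mul_geometric 1 0 (norm_nonneg x) hx)
  rw [norm_div, norm_pow, pow_zero, one_mul, Complex.norm_natCast]
  gcongr
  exact div_nat_le_self_of_nonnneg (by positivity) n

lemma hasSum_neg_log_one_sub_pow (hx : ‖x‖ < 1) :
    HasSum (fun j : ℕ ↦ -Complex.log (1 - x ^ (j + 1))) (eulerLog x) := by
  have hpairs := hasSum_prod_pow_mul (summable_sigma_one_mul_pow_div hx)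
  have hrow (j : ℕ+) : HasSum (fun k : ℕ+ ↦ (j : ℂ) ^ 1 * (x ^ (j * k : ℕ) / ((j * k : ℕ) : ℂ)))
      (-Complex.log (1 - x ^ (j : ℕ))) := by
    have hxj : ‖x ^ (j : ℕ)‖ < 1 := by
      rw [norm_pow]; exact pow_lt_one₀ (norm_nonneg x) hx j.ne_zero
    refine ((hasSum_pnat_iff (f := fun k : ℕ ↦ (x ^ (j : ℕ)) ^ k / (k : ℂ))).2
      (by simpa using Complex.hasSum_taylorSeries_neg_log hxj)).congr_fun fun k ↦ ?_
    push_cast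
    rw [pow_mul]
    field_simp
  exact (hasSum_pnat_iff_hasSum_succ (f := fun j : ℕ ↦ -Complex.log (1 - x ^ j))).1
    (hpairs.prod_fiberwise hrow)

lemma one_sub_pow_ne_zero {𝕜 : Type*} [NormedField 𝕜] {x : 𝕜} (hx : ‖x‖ < 1) {j : ℕ} (hj : j ≠ 0) :
    1 - x ^ j ≠ 0 := by
  refine sub_ne_zero.2 fun h ↦ (pow_lt_one₀ (norm_nonneg x) hx hj).ne ?_
  rw [← norm_pow, ← h, norm_one]

lemma hasProd_inv_one_sub_pow (hx : ‖x‖ < 1) :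
    HasProd (fun j : ℕ ↦ (1 - x ^ (j + 1))⁻¹) (Complex.exp (eulerLog x)) :=
  (hasSum_neg_log_one_sub_pow hx).cexp.congr_fun fun j ↦ by
    rw [Function.comp_apply, Complex.exp_neg, Complex.exp_log (one_sub_pow_ne_zero hx (by simp))]

lemma gC_eq_exp_eulerLog (hx : ‖x‖ < 1) : gC x = Complex.exp (eulerLog x) :=
  (hasProd_inv_one_sub_pow hx).tprod_eq

end EulerProduct

section PowerSeriesEvaluation

open PowerSeries

variable {𝕜 : Type*} [NormedField 𝕜] {x : 𝕜}

lemma coeff_mul_mul_pow {R : Type*} [CommSemiring R] (f g : R⟦X⟧) (x : R) (n : ℕ) :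
    coeff n (f * g) * x ^ n =
      ∑ p ∈ Finset.HasAntidiagonal.antidiagonal n,
        coeff p.1 f * x ^ p.1 * (coeff p.2 g * x ^ p.2) := by
  rw [coeff_mul, Finset.sum_mul]
  refine Finset.sum_congr rfl fun p hp ↦ ?_
  rw [← Finset.HasAntidiagonal.mem_antidiagonal.1 hp, pow_add]
  ring

lemma summable_norm_coeff_prod_mul_pow {ι : Type*} (s : Finset ι) {f : ι → 𝕜⟦X⟧}
    (hf : ∀ i, Summable fun n ↦ ‖coeff n (f i) * x ^ n‖) :
    Summable fun n ↦ ‖coeff n (∏ i ∈ s, f i) * x ^ n‖ := by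
  classical
  induction s using Finset.induction_on with
  | empty =>
    refine summable_of_ne_finset_zero (s := {0}) fun n hn ↦ ?_
    simp [coeff_one, Finset.notMem_singleton.1 hn]
  | insert i s hi ih =>
    simpa only [Finset.prod_insert hi, coeff_mul_mul_pow] using
      summable_norm_sum_mul_antidiagonal_of_summable_norm (hf i) ih

lemma tsum_coeff_prod_mul_pow [CompleteSpace 𝕜] {ι : Type*} (s : Finset ι) {f : ι → 𝕜⟦X⟧}
    (hf : ∀ i, Summable fun n ↦ ‖coeff n (f i) * x ^ n‖) :
    ∑' n, coeff n (∏ i ∈ s, f i) * x ^ n = ∏ i ∈ s, ∑' n, coeff n (f i) * x ^ n := by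
  classical
  induction s using Finset.induction_on with
  | empty =>
    rw [Finset.prod_empty, tsum_eq_single 0 fun n hn ↦ by simp [coeff_one, hn]]
    simp
  | insert i s hi ih =>
    simp only [Finset.prod_insert hi, coeff_mul_mul_pow]
    rw [← tsum_mul_tsum_eq_tsum_sum_antidiagonal_of_summable_norm (hf i)
      (summable_norm_coeff_prod_mul_pow s hf), ih]

open scoped PowerSeries.WithPiTopology in
lemma tsum_X_pow_mul {R : Type*} [CommSemiring R] [TopologicalSpace R] [T2Space R] {k : ℕ}
    (hk : k ≠ 0) :
    ∑' j : ℕ, (X : R⟦X⟧) ^ (k * j) = PowerSeries.mk fun n ↦ if k ∣ n then 1 else 0 := by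
  nontriviality R
  have hsummable : Summable fun j : ℕ ↦ (X : R⟦X⟧) ^ (k * j) := by
    refine WithPiTopology.summable_of_tendsto_order_atTop_nhds_top R
      (ENat.tendsto_nhds_top_iff_natCast_lt.2 fun n ↦ eventually_atTop.2 ⟨n + 1, fun j hj ↦ ?_⟩)
    rw [order_X_pow]
    exact_mod_cast (Nat.lt_of_succ_le hj).trans_le (Nat.le_mul_of_pos_left j (by omega))
  ext n
  rw [hsummable.map_tsum _ (WithPiTopology.continuous_coeff R n)]
  simp only [coeff_X_pow, coeff_mk]
  split_ifs with hkn
  · obtain ⟨j, rfl⟩ := hkn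
    rw [tsum_eq_single j fun i hi ↦ if_neg fun h ↦ hi (Nat.eq_of_mul_eq_mul_left (by omega) h.symm),
      if_pos rfl]
  · exact (tsum_congr fun j ↦ if_neg fun h ↦ hkn ⟨j, h⟩).trans tsum_zero

lemma summable_norm_ite_dvd_mul_pow (k : ℕ) (hx : ‖x‖ < 1) :
    Summable fun n : ℕ ↦ ‖(if k ∣ n then 1 else 0) * x ^ n‖ := by
  refine .of_nonneg_of_le (fun _ ↦ norm_nonneg _) (fun n ↦ ?_)
    (summable_geometric_of_lt_one (norm_nonneg x) hx)
  rw [norm_mul, norm_pow]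
  split_ifs <;> simp

lemma tsum_ite_dvd_mul_pow {k : ℕ} (hk : k ≠ 0) (hx : ‖x‖ < 1) :
    ∑' n : ℕ, (if k ∣ n then 1 else 0) * x ^ n = (1 - x ^ k)⁻¹ := by
  have hxk : ‖x ^ k‖ < 1 := by rw [norm_pow]; exact pow_lt_one₀ (norm_nonneg x) hx hk
  have hsupport : (Function.support fun n : ℕ ↦ (if k ∣ n then 1 else 0) * x ^ n) ⊆
      Set.range (k * ·) := by
    intro n hn
    by_contra hrange
    exact hn (by simp [show ¬ k ∣ n from fun ⟨j, h⟩ ↦ hrange ⟨j, h.symm⟩])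
  rw [← (mul_right_injective₀ hk).tsum_eq hsupport, ← tsum_geometric_of_norm_lt_one hxk]
  simp [pow_mul]

end PowerSeriesEvaluation

section PartitionGeneratingFunction

variable {x : ℂ}

lemma card_restricted_le_eq (n M : ℕ) (h : n ≤ M) :
    (Nat.Partition.restricted n (· ≤ M)).card = Fintype.card n.Partition := by
  rw [Nat.Partition.restricted, Finset.filter_true_of_mem, Finset.card_univ]
  exact fun p _ i hi ↦ (Multiset.le_sum_of_mem hi).trans (p.parts_sum.trans_le h)

open scoped PowerSeries.WithPiTopology in
lemma powerSeriesMk_card_restricted_le (M : ℕ) :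
    PowerSeries.mk (fun n ↦ ((Nat.Partition.restricted n (· ≤ M)).card : ℂ)) =
      ∏ i ∈ Finset.range M, PowerSeries.mk fun n ↦ if i + 1 ∣ n then 1 else 0 := by
  refine (Nat.Partition.hasProd_powerSeriesMk_card_restricted ℂ (· ≤ M)).unique ?_
  simp only [tsum_X_pow_mul (Nat.succ_ne_zero _)]
  rw [Finset.prod_congr rfl fun i hi ↦ (if_pos (Finset.mem_range.1 hi)).symm]
  exact hasProd_prod_of_ne_finset_one fun i hi ↦ if_neg (by simpa using hi)

lemma summable_norm_card_restricted_le (M : ℕ) (hx : ‖x‖ < 1) :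
    Summable fun n : ℕ ↦ ‖((Nat.Partition.restricted n (· ≤ M)).card : ℂ) * x ^ n‖ := by
  simpa only [← powerSeriesMk_card_restricted_le, PowerSeries.coeff_mk] using
    summable_norm_coeff_prod_mul_pow (Finset.range M)
      (f := fun i ↦ PowerSeries.mk fun n ↦ if i + 1 ∣ n then (1 : ℂ) else 0) fun i ↦ by
        simpa only [PowerSeries.coeff_mk] using summable_norm_ite_dvd_mul_pow (i + 1) hx

lemma tsum_card_restricted_le (M : ℕ) (hx : ‖x‖ < 1) :
    ∑' n : ℕ, ((Nat.Partition.restricted n (· ≤ M)).card : ℂ) * x ^ n =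
      ∏ i ∈ Finset.range M, (1 - x ^ (i + 1))⁻¹ := by
  rw [Finset.prod_congr rfl fun i _ ↦ (tsum_ite_dvd_mul_pow i.succ_ne_zero hx).symm]
  simpa only [← powerSeriesMk_card_restricted_le, PowerSeries.coeff_mk] using
    tsum_coeff_prod_mul_pow (Finset.range M)
      (f := fun i ↦ PowerSeries.mk fun n ↦ if i + 1 ∣ n then (1 : ℂ) else 0) fun i ↦ by
        simpa only [PowerSeries.coeff_mk] using summable_norm_ite_dvd_mul_pow (i + 1) hx

lemma summable_card_partition_mul_pow {r : ℝ} (hr₀ : 0 ≤ r) (hr₁ : r < 1) :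
    Summable fun n : ℕ ↦ (Fintype.card n.Partition : ℝ) * r ^ n := by
  have hr : ‖(r : ℂ)‖ < 1 := by simpa [abs_of_nonneg hr₀]
  obtain ⟨C, hC⟩ := (Metric.isBounded_range_of_tendsto _
    (hasProd_inv_one_sub_pow hr).tendsto_prod_nat).exists_norm_le
  refine summable_of_sum_range_le (c := C) (fun n ↦ by positivity) fun N ↦ ?_
  have hsummable := summable_norm_card_restricted_le N hr
  calc ∑ n ∈ Finset.range N, (Fintype.card n.Partition : ℝ) * r ^ n
      = ∑ n ∈ Finset.range N, ((Nat.Partition.restricted n (· ≤ N)).card : ℝ) * r ^ n :=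
        Finset.sum_congr rfl fun n hn ↦ by
          rw [card_restricted_le_eq n N (Finset.mem_range.1 hn).le]
    _ ≤ ∑' n, ((Nat.Partition.restricted n (· ≤ N)).card : ℝ) * r ^ n :=
        Summable.sum_le_tsum _ (fun n _ ↦ by positivity)
          (by simpa [abs_of_nonneg hr₀] using hsummable)
    _ ≤ ‖∑' n, ((Nat.Partition.restricted n (· ≤ N)).card : ℂ) * (r : ℂ) ^ n‖ := by
        refine (le_abs_self _).trans (le_of_eq ?_)
        rw [← Real.norm_eq_abs, ← Complex.norm_real]
        push_cast
        rfl
    _ ≤ C := by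
        rw [tsum_card_restricted_le N hr]
        exact hC _ ⟨N, rfl⟩

theorem hasSum_card_partition_mul_pow (hx : ‖x‖ < 1) :
    HasSum (fun n : ℕ ↦ (Fintype.card n.Partition : ℂ) * x ^ n) (gC x) := by
  have hsummable := summable_card_partition_mul_pow (norm_nonneg x) hx
  have hlimit : Tendsto
      (fun M : ℕ ↦ ∑' n : ℕ, ((Nat.Partition.restricted n (· ≤ M)).card : ℂ) * x ^ n) atTop
      (𝓝 (∑' n : ℕ, (Fintype.card n.Partition : ℂ) * x ^ n)) := by
    refine tendsto_tsum_of_dominated_convergence hsummable (fun n ↦ ?_)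
      (Eventually.of_forall fun M n ↦ ?_)
    · refine tendsto_const_nhds.congr' ?_
      filter_upwards [eventually_ge_atTop n] with M hM
      rw [card_restricted_le_eq n M hM]
    · rw [norm_mul, norm_pow, Complex.norm_natCast]
      gcongr
      exact Finset.card_le_univ _
  have hproduct := (hasProd_inv_one_sub_pow hx).multipliable.hasProd.tendsto_prod_nat
  simp only [tsum_card_restricted_le _ hx] at hlimit
  rw [gC, tendsto_nhds_unique hproduct hlimit]
  exact (Summable.of_norm (by simpa using hsummable)).hasSum

end PartitionGeneratingFunction

section CircleIntegrals

/-- The point `e^{-d+iθ}` of the circle of radius `e^{-d}` on which the integrals are taken. -/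
noncomputable def circlePoint (d θ : ℝ) : ℂ := Complex.exp (-(d : ℂ) + θ * Complex.I)

variable {d : ℝ}

lemma norm_circlePoint (d θ : ℝ) : ‖circlePoint d θ‖ = Real.exp (-d) := by
  simp [circlePoint, Complex.norm_exp]

lemma norm_circlePoint_lt_one (hd : 0 < d) (θ : ℝ) : ‖circlePoint d θ‖ < 1 := by
  simpa [norm_circlePoint] using hd

lemma circlePoint_pow (d θ : ℝ) (n : ℕ) :
    circlePoint d θ ^ n = (Real.exp (-d) ^ n : ℝ) * Complex.exp ((n * θ : ℝ) * Complex.I) := by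
  rw [circlePoint, Complex.exp_add, mul_pow, ← Complex.exp_nat_mul (θ * Complex.I)]
  push_cast
  ring_nf

@[fun_prop]
lemma continuous_circlePoint (d : ℝ) : Continuous (circlePoint d) := by
  unfold circlePoint; fun_prop

lemma norm_exp_neg_mul_I (θ x : ℝ) : ‖Complex.exp (-(θ * x) * Complex.I)‖ = 1 := by
  simpa using Complex.norm_exp_ofReal_mul_I (-(θ * x))

lemma norm_mul_circlePoint_pow (c : ℂ) (d θ : ℝ) (n : ℕ) :
    ‖c * circlePoint d θ ^ n‖ = ‖c‖ * Real.exp (-d) ^ n := by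
  rw [norm_mul, norm_pow, norm_circlePoint]

variable {a : ℕ → ℂ}

lemma continuous_tsum_mul_circlePoint_pow (ha : Summable fun n ↦ ‖a n‖ * Real.exp (-d) ^ n) :
    Continuous fun θ ↦ ∑' n, a n * circlePoint d θ ^ n :=
  continuous_tsum (fun n ↦ by fun_prop) ha fun n θ ↦ (norm_mul_circlePoint_pow _ _ _ _).le

lemma integral_exp_int_mul_I (k : ℤ) :
    ∫ θ in (-π)..π, Complex.exp (k * θ * Complex.I) = if k = 0 then (2 * π : ℂ) else 0 := by
  split_ifs with hk
  · simp [hk, two_mul]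
  · have hkI : (k * Complex.I : ℂ) ≠ 0 := mul_ne_zero (mod_cast hk) Complex.I_ne_zero
    simp only [mul_right_comm _ _ Complex.I]
    rw [integral_exp_mul_complex hkI, div_eq_zero_iff, sub_eq_zero,
      Complex.exp_eq_exp_iff_exists_int]
    exact .inl ⟨k, by push_cast; ring⟩

lemma integral_circlePoint_pow_mul_exp (d : ℝ) (k n : ℕ) :
    ∫ θ in (-π)..π, circlePoint d θ ^ k * Complex.exp (-(θ * n) * Complex.I) =
      if k = n then 2 * π * (Real.exp (-d) : ℂ) ^ n else 0 := by
  have hphase (θ : ℝ) : circlePoint d θ ^ k * Complex.exp (-(θ * n) * Complex.I) =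
      (Real.exp (-d) : ℂ) ^ k * Complex.exp (((k - n : ℤ) : ℂ) * θ * Complex.I) := by
    rw [circlePoint_pow, mul_assoc, ← Complex.exp_add]
    push_cast
    ring_nf
  simp only [hphase]
  rw [intervalIntegral.integral_const_mul, integral_exp_int_mul_I]
  simp only [sub_eq_zero, Nat.cast_inj]
  split_ifs with hkn
  · rw [hkn, mul_comm]
  · rw [mul_zero]

theorem integral_tsum_mul_circlePoint_pow (ha : Summable fun n ↦ ‖a n‖ * Real.exp (-d) ^ n)
    (n : ℕ) :
    ∫ θ in (-π)..π, (∑' k, a k * circlePoint d θ ^ k) * Complex.exp (-(θ * n) * Complex.I) =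
      a n * (2 * π * (Real.exp (-d) : ℂ) ^ n) := by
  have hnorm (k : ℕ) (θ : ℝ) :
      ‖a k * circlePoint d θ ^ k * Complex.exp (-(θ * n) * Complex.I)‖ =
        ‖a k‖ * Real.exp (-d) ^ k := by
    rw [norm_mul, norm_mul_circlePoint_pow, ← Complex.ofReal_natCast, norm_exp_neg_mul_I, mul_one]
  have htermwise := intervalIntegral.hasSum_integral_of_dominated_convergence
    (a := -π) (b := π) (μ := MeasureTheory.volume)
    (F := fun k θ ↦ a k * circlePoint d θ ^ k * Complex.exp (-(θ * n) * Complex.I))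
    (fun k _ ↦ ‖a k‖ * Real.exp (-d) ^ k)
    (fun k ↦ Continuous.aestronglyMeasurable (by fun_prop))
    (fun k ↦ .of_forall fun θ _ ↦ (hnorm k θ).le) (.of_forall fun _ _ ↦ ha)
    intervalIntegrable_const
    (.of_forall fun θ _ ↦ (Summable.of_norm
      (ha.congr fun k ↦ (norm_mul_circlePoint_pow _ _ θ _).symm)).hasSum.mul_right _)
  rw [← htermwise.tsum_eq]
  simp_rw [mul_assoc (a _), intervalIntegral.integral_const_mul, integral_circlePoint_pow_mul_exp,
    mul_ite, mul_zero]
  exact tsum_ite_eq n _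

end CircleIntegrals

section GeneratingFunctionsOnCircle

variable {d : ℝ}

lemma summable_card_partition_mul_exp (hd : 0 < d) :
    Summable fun n : ℕ ↦ ‖(Fintype.card n.Partition : ℂ)‖ * Real.exp (-d) ^ n := by
  simpa using summable_card_partition_mul_pow (Real.exp_pos (-d)).le (by simpa using hd)

lemma gC_circlePoint (hd : 0 < d) (θ : ℝ) :
    gC (circlePoint d θ) = ∑' n : ℕ, (Fintype.card n.Partition : ℂ) * circlePoint d θ ^ n :=
  (hasSum_card_partition_mul_pow (norm_circlePoint_lt_one hd θ)).tsum_eq.symm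

lemma continuous_gC_circlePoint (hd : 0 < d) : Continuous fun θ ↦ gC (circlePoint d θ) := by
  simpa only [gC_circlePoint hd] using
    continuous_tsum_mul_circlePoint_pow (summable_card_partition_mul_exp hd)

theorem integral_gC_circlePoint_mul_exp (hd : 0 < d) (n : ℕ) :
    ∫ θ in (-π)..π, gC (circlePoint d θ) * Complex.exp (-(θ * n) * Complex.I) =
      Fintype.card n.Partition * (2 * π * (Real.exp (-d) : ℂ) ^ n) := by
  simpa only [gC_circlePoint hd] using
    integral_tsum_mul_circlePoint_pow (summable_card_partition_mul_exp hd) n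

lemma FC_circlePoint (m : ℕ) (hd : 0 < d) (θ : ℝ) :
    FC m (circlePoint d θ) = ∑' n : ℕ, (σ m n : ℂ) * circlePoint d θ ^ n :=
  tsum_pow_div_one_sub_eq_tsum_nat_sigma m (norm_circlePoint_lt_one hd θ)

lemma hasSum_sigma_mul_exp (m : ℕ) (hd : 0 < d) :
    HasSum (fun n : ℕ ↦ ‖(σ m n : ℂ)‖ * Real.exp (-d) ^ n) (sigmaMoment m 0 d) := by
  simpa [sigmaMoment] using (summable_sigmaMoment m 0 hd).hasSum

lemma continuous_FC_circlePoint (m : ℕ) (hd : 0 < d) :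
    Continuous fun θ ↦ FC m (circlePoint d θ) := by
  simpa only [FC_circlePoint m hd] using
    continuous_tsum_mul_circlePoint_pow (hasSum_sigma_mul_exp m hd).summable

lemma norm_FC_circlePoint_le (m : ℕ) (hd : 0 < d) (θ : ℝ) :
    ‖FC m (circlePoint d θ)‖ ≤ sigmaMoment m 0 d := by
  rw [FC_circlePoint m hd]
  exact tsum_of_norm_bounded (hasSum_sigma_mul_exp m hd) fun n ↦
    (norm_mul_circlePoint_pow _ _ _ _).le

lemma norm_FC_circlePoint_sub_le (m : ℕ) (hd : 0 < d) (θ : ℝ) :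
    ‖FC m (circlePoint d θ) - sigmaMoment m 0 d‖ ≤ |θ| * sigmaMoment m 1 d := by
  have hcircle := (hasSum_sigma_mul_exp m hd).summable.congr fun n ↦
    (norm_mul_circlePoint_pow _ _ θ _).symm
  rw [FC_circlePoint m hd, sigmaMoment, Complex.ofReal_tsum,
    ← hcircle.of_norm.tsum_sub (Complex.summable_ofReal.2 (summable_sigmaMoment m 0 hd))]
  refine tsum_of_norm_bounded ((summable_sigmaMoment m 1 hd).hasSum.mul_left |θ|) fun n ↦ ?_
  have hfactor : (σ m n : ℂ) * circlePoint d θ ^ n -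
      ((σ m n * ((n : ℝ) ^ 0 * Real.exp (-d) ^ n) : ℝ) : ℂ) =
      (σ m n * Real.exp (-d) ^ n : ℝ) * (Complex.exp (Complex.I * (n * θ : ℝ)) - 1) := by
    rw [circlePoint_pow, mul_comm Complex.I]
    push_cast
    ring
  calc _ = σ m n * Real.exp (-d) ^ n * ‖Complex.exp (Complex.I * (n * θ : ℝ)) - 1‖ := by
        rw [hfactor, norm_mul, Complex.norm_real, Real.norm_of_nonneg (by positivity)]
    _ ≤ σ m n * Real.exp (-d) ^ n * ‖n * θ‖ := by
        gcongr
        exact Real.norm_exp_I_mul_ofReal_sub_one_le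
    _ = |θ| * (σ m n * ((n : ℝ) ^ 1 * Real.exp (-d) ^ n)) := by
        rw [norm_mul, Real.norm_eq_abs θ, Real.norm_natCast, pow_one]
        ring

end GeneratingFunctionsOnCircle

section SaddleExponent

/-- The exponent of `g` at `e^{-d+iθ}` relative to the real point `e^{-d}`, with its term linear in
`θ` removed; the choice of `d_n` makes that linear term cancel the factor `e^{-iθn}`. -/
noncomputable def saddleExponent (d θ : ℝ) : ℂ :=
  eulerLog (circlePoint d θ) - eulerLog (circlePoint d 0) - (θ * aFun d) * Complex.I

variable {d θ : ℝ}

lemma gC_circlePoint_mul_exp (hd : 0 < d) (θ : ℝ) :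
    gC (circlePoint d θ) * Complex.exp (-(θ * aFun d) * Complex.I) =
      gC (circlePoint d 0) * Complex.exp (saddleExponent d θ) := by
  rw [gC_eq_exp_eulerLog (norm_circlePoint_lt_one hd θ),
    gC_eq_exp_eulerLog (norm_circlePoint_lt_one hd 0), ← Complex.exp_add, ← Complex.exp_add,
    saddleExponent]
  ring_nf

lemma sigma_one_mul_div_mul_pow_succ (b n : ℕ) (y : ℝ) :
    σ 1 n * (y / n) * (n : ℝ) ^ (b + 1) = σ 1 n * (n ^ b * y) := by
  rcases eq_or_ne n 0 with rfl | hn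
  · simp
  · field_simp
    ring

lemma hasSum_eulerLog_circlePoint (hd : 0 < d) (θ : ℝ) :
    HasSum (fun n : ℕ ↦ (σ 1 n * (Real.exp (-d) ^ n / n) : ℝ) *
      Complex.exp ((n * θ : ℝ) * Complex.I)) (eulerLog (circlePoint d θ)) := by
  have hsummable : Summable fun n : ℕ ↦ (σ 1 n : ℂ) * (circlePoint d θ ^ n / n) := by
    refine .of_norm ?_
    simpa using summable_sigma_one_mul_pow_div (norm_circlePoint_lt_one hd θ)
  refine hsummable.hasSum.congr_fun fun n ↦ ?_
  rw [circlePoint_pow]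
  push_cast
  ring

lemma hasSum_saddleExponent (hd : 0 < d) (θ : ℝ) :
    HasSum (fun n : ℕ ↦ (σ 1 n * (Real.exp (-d) ^ n / n) : ℝ) *
      (Complex.exp ((n * θ : ℝ) * Complex.I) - 1 - (n * θ : ℝ) * Complex.I))
      (saddleExponent d θ) := by
  have hconst := hasSum_eulerLog_circlePoint hd 0
  have hlinear := ((Complex.hasSum_ofReal.2 (summable_sigmaMoment 1 0 hd).hasSum).mul_left
    (θ : ℂ)).mul_right Complex.I
  rw [← sigmaMoment, ← aFun_eq_sigmaMoment hd] at hlinear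
  refine (((hasSum_eulerLog_circlePoint hd θ).sub hconst).sub hlinear).congr_fun fun n ↦ ?_
  rw [← sigma_one_mul_div_mul_pow_succ]
  push_cast
  simp only [mul_zero, zero_mul, Complex.exp_zero]
  ring

lemma norm_exp_mul_I_sub_taylor_le (x : ℝ) :
    ‖Complex.exp (x * Complex.I) - 1 - x * Complex.I + (x : ℂ) ^ 2 / 2‖ ≤ 4 * |x| ^ 3 := by
  rcases le_or_gt |x| 1 with hx | hx
  · have hbound := Complex.exp_bound (x := x * Complex.I) (by simpa using hx) (n := 3) (by norm_num)
    have htaylor : Complex.exp (x * Complex.I) - 1 - x * Complex.I + (x : ℂ) ^ 2 / 2 =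
        Complex.exp (x * Complex.I) - ∑ k ∈ Finset.range 3, (x * Complex.I) ^ k / (k ! : ℂ) := by
      simp only [Finset.sum_range_succ, Finset.sum_range_zero, Nat.factorial, mul_pow, Complex.I_sq]
      push_cast
      ring
    rw [htaylor]
    refine hbound.trans ?_
    simp only [norm_mul, Complex.norm_real, Complex.norm_I, mul_one, Real.norm_eq_abs]
    rw [mul_comm]
    gcongr
    norm_num [Nat.factorial]
  · calc ‖Complex.exp (x * Complex.I) - 1 - x * Complex.I + (x : ℂ) ^ 2 / 2‖
        ≤ ‖Complex.exp (x * Complex.I)‖ + ‖(1 : ℂ)‖ + ‖x * Complex.I‖ + ‖(x : ℂ) ^ 2 / 2‖ :=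
          (norm_add_le _ _).trans (by gcongr; exact norm_sub_le_of_le (norm_sub_le _ _) le_rfl)
      _ = 1 + 1 + |x| + |x| ^ 2 / 2 := by rw [Complex.norm_exp_ofReal_mul_I]; simp
      _ ≤ |x| ^ 3 + |x| ^ 3 + |x| ^ 3 + |x| ^ 3 := by
          have hsq : |x| ^ 2 ≤ |x| ^ 3 := pow_le_pow_right₀ hx.le (by norm_num)
          gcongr
          · exact one_le_pow₀ hx.le
          · exact one_le_pow₀ hx.le
          · exact le_self_pow₀ hx.le (by norm_num)
          · exact (half_le_self (sq_nonneg _)).trans hsq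
      _ = 4 * |x| ^ 3 := by ring

theorem norm_saddleExponent_add_le (hd : 0 < d) (θ : ℝ) :
    ‖saddleExponent d θ + (θ ^ 2 / 2 * sigmaMoment 1 1 d : ℝ)‖ ≤
      4 * |θ| ^ 3 * sigmaMoment 1 2 d := by
  have hquadratic := Complex.hasSum_ofReal.2
    ((summable_sigmaMoment 1 1 hd).hasSum.mul_left (θ ^ 2 / 2))
  rw [← sigmaMoment] at hquadratic
  rw [← ((hasSum_saddleExponent hd θ).add hquadratic).tsum_eq]
  refine tsum_of_norm_bounded ((summable_sigmaMoment 1 2 hd).hasSum.mul_left (4 * |θ| ^ 3))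
    fun n ↦ ?_
  have hterm : ((σ 1 n * (Real.exp (-d) ^ n / n) : ℝ) : ℂ) *
      (Complex.exp ((n * θ : ℝ) * Complex.I) - 1 - (n * θ : ℝ) * Complex.I) +
      (θ ^ 2 / 2 * (σ 1 n * ((n : ℝ) ^ 1 * Real.exp (-d) ^ n)) : ℝ) =
      (σ 1 n * (Real.exp (-d) ^ n / n) : ℝ) * (Complex.exp ((n * θ : ℝ) * Complex.I) - 1 -
        (n * θ : ℝ) * Complex.I + ((n * θ : ℝ) : ℂ) ^ 2 / 2) := by
    rw [← sigma_one_mul_div_mul_pow_succ]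
    push_cast
    ring
  rw [hterm, norm_mul, Complex.norm_real, Real.norm_of_nonneg (by positivity)]
  calc _ ≤ σ 1 n * (Real.exp (-d) ^ n / n) * (4 * |n * θ| ^ 3) := by
        gcongr
        exact norm_exp_mul_I_sub_taylor_le _
    _ = 4 * |θ| ^ 3 * (σ 1 n * ((n : ℝ) ^ 2 * Real.exp (-d) ^ n)) := by
        rw [← sigma_one_mul_div_mul_pow_succ, abs_mul, Nat.abs_cast]
        ring

lemma hasSum_geometric_mul_one_sub_cos (hd : 0 < d) (θ : ℝ) :
    HasSum (fun n : ℕ ↦ Real.exp (-d) ^ n * (1 - Real.cos (n * θ)))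
      ((1 - Real.exp (-d))⁻¹ - ((1 - circlePoint d θ)⁻¹).re) := by
  have hreal := hasSum_geometric_of_lt_one (Real.exp_pos (-d)).le (by simpa using hd)
  have hcircle := Complex.hasSum_re (hasSum_geometric_of_norm_lt_one (norm_circlePoint_lt_one hd θ))
  refine (hreal.sub hcircle).congr_fun fun n ↦ ?_
  rw [circlePoint_pow, Complex.re_ofReal_mul, Complex.exp_ofReal_mul_I_re]
  ring

lemma hasSum_neg_re_saddleExponent (hd : 0 < d) (θ : ℝ) :
    HasSum (fun n : ℕ ↦ σ 1 n * (Real.exp (-d) ^ n / n) * (1 - Real.cos (n * θ)))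
      (-(saddleExponent d θ).re) := by
  refine (Complex.hasSum_re (hasSum_saddleExponent hd θ)).neg.congr_fun fun n ↦ ?_
  rw [Complex.re_ofReal_mul]
  simp only [Complex.sub_re, Complex.exp_ofReal_mul_I_re, Complex.one_re, Complex.re_ofReal_mul,
    Complex.I_re]
  ring

lemma one_sub_cos_nonneg (x : ℝ) : 0 ≤ 1 - Real.cos x := sub_nonneg.2 (Real.cos_le_one x)

lemma re_saddleExponent_le (hd : 0 < d) (θ : ℝ) :
    (saddleExponent d θ).re ≤ -((1 - Real.exp (-d))⁻¹ - ((1 - circlePoint d θ)⁻¹).re) := by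
  rw [le_neg]
  refine hasSum_le (fun n ↦ ?_) (hasSum_geometric_mul_one_sub_cos hd θ)
    (hasSum_neg_re_saddleExponent hd θ)
  rcases eq_or_ne n 0 with rfl | hn
  · simp
  have hσ : (n : ℝ) ≤ σ 1 n := by
    rw [ArithmeticFunction.sigma_one_apply]
    exact_mod_cast Finset.single_le_sum (f := fun i ↦ i) (fun _ _ ↦ Nat.zero_le _)
      (Nat.mem_divisors_self n hn)
  refine mul_le_mul_of_nonneg_right ?_ (one_sub_cos_nonneg _)
  calc Real.exp (-d) ^ n = n * (Real.exp (-d) ^ n / n) := by field_simp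
    _ ≤ σ 1 n * (Real.exp (-d) ^ n / n) := by gcongr

lemma inv_one_sub_exp_sub_re_inv_one_sub_circlePoint (hd : 0 < d) (θ : ℝ) :
    (1 - Real.exp (-d))⁻¹ - ((1 - circlePoint d θ)⁻¹).re =
      Real.exp (-d) * (1 - Real.cos θ) * (1 + Real.exp (-d)) / ((1 - Real.exp (-d)) *
        ((1 - Real.exp (-d)) ^ 2 + 2 * (Real.exp (-d) * (1 - Real.cos θ)))) := by
  have hq : 0 < 1 - Real.exp (-d) := by simpa using hd
  have hcos := one_sub_cos_nonneg θ
  have hre : (circlePoint d θ).re = Real.exp (-d) * Real.cos θ := by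
    simp [circlePoint, Complex.exp_re]
  have him : (circlePoint d θ).im = Real.exp (-d) * Real.sin θ := by
    simp [circlePoint, Complex.exp_im]
  have hnormSq : Complex.normSq (1 - circlePoint d θ) =
      (1 - Real.exp (-d)) ^ 2 + 2 * (Real.exp (-d) * (1 - Real.cos θ)) := by
    rw [Complex.normSq_apply]
    simp only [Complex.sub_re, Complex.sub_im, Complex.one_re, Complex.one_im, hre, him]
    linear_combination Real.exp (-d) ^ 2 * Real.sin_sq_add_cos_sq θ
  rw [Complex.inv_re, hnormSq, Complex.sub_re, Complex.one_re, hre]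
  field_simp
  ring

lemma one_third_le_exp_neg (hd : d ≤ 1) : 1 / 3 ≤ Real.exp (-d) := by
  rw [Real.exp_neg, one_div]
  exact inv_anti₀ (Real.exp_pos d) ((Real.exp_le_exp.2 hd).trans Real.exp_one_lt_three.le)

lemma div_mul_sq_add_le {q d v y : ℝ} (hq : 0 < q) (hqd : q ≤ d) (hv : 0 ≤ v) (hvy : v ≤ y) :
    v / (d * (d ^ 2 + 2 * v)) ≤ y / (q * (q ^ 2 + 2 * y)) := by
  have hy : 0 ≤ y := hv.trans hvy
  have hd : 0 < d := hq.trans_le hqd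
  calc v / (d * (d ^ 2 + 2 * v)) ≤ v / (q * (q ^ 2 + 2 * v)) := by gcongr
    _ ≤ y / (q * (q ^ 2 + 2 * y)) := by
        rw [div_le_div_iff₀ (by positivity) (by positivity)]
        have hcube : v * q ^ 3 ≤ y * q ^ 3 := by gcongr
        linear_combination hcube

lemma re_saddleExponent_le_neg_div (hd : 0 < d) (hd₁ : d ≤ 1) (hθ : |θ| ≤ π) :
    (saddleExponent d θ).re ≤ -(2 * θ ^ 2 / (d * (3 * π ^ 2 * d ^ 2 + 4 * θ ^ 2))) := by
  refine (re_saddleExponent_le hd θ).trans (neg_le_neg ?_)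
  rw [inv_one_sub_exp_sub_re_inv_one_sub_circlePoint hd]
  have hq : 0 < 1 - Real.exp (-d) := by simpa using hd
  have hqd : 1 - Real.exp (-d) ≤ d := by linarith [Real.add_one_le_exp (-d)]
  have hcos : 2 / π ^ 2 * θ ^ 2 ≤ 1 - Real.cos θ := by
    linarith [Real.cos_le_one_sub_mul_cos_sq hθ]
  have hlower : 1 / 3 * (2 / π ^ 2 * θ ^ 2) ≤ Real.exp (-d) * (1 - Real.cos θ) := by
    gcongr
    exact one_third_le_exp_neg hd₁
  have hcos₀ := one_sub_cos_nonneg θ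
  calc 2 * θ ^ 2 / (d * (3 * π ^ 2 * d ^ 2 + 4 * θ ^ 2))
      = 1 / 3 * (2 / π ^ 2 * θ ^ 2) / (d * (d ^ 2 + 2 * (1 / 3 * (2 / π ^ 2 * θ ^ 2)))) := by
        field_simp
        ring
    _ ≤ _ := div_mul_sq_add_le hq hqd (by positivity) hlower
    _ ≤ _ := by
        refine div_le_div_of_nonneg_right ?_ (by positivity)
        exact le_mul_of_one_le_right (by positivity) (le_add_of_nonneg_right (Real.exp_pos (-d)).le)

lemma one_add_sq_le_exp_div {t : ℝ} (hd : 0 < d) (ht : t ^ 2 * d ^ 3 ≤ π ^ 2) :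
    1 + t ^ 2 ≤ 384 * π ^ 2 * Real.exp (2 * t ^ 2 / (3 * π ^ 2 + 4 * t ^ 2 * d)) := by
  set S := 2 * t ^ 2 / (3 * π ^ 2 + 4 * t ^ 2 * d)
  have hS : 0 ≤ S := by positivity
  have hexp : 1 + S + S ^ 2 / 2 + S ^ 3 / 6 ≤ Real.exp S := by
    simpa [Finset.sum_range_succ, Nat.factorial] using Real.sum_le_exp_of_nonneg hS 4
  have hπ : 1 ≤ π ^ 2 := one_le_pow₀ (by linarith [Real.pi_gt_three])
  suffices hlarge : t ^ 2 ≤ 384 * π ^ 2 * (S + S ^ 3 / 6) by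
    calc 1 + t ^ 2 ≤ 384 * π ^ 2 * (1 + S + S ^ 2 / 2 + S ^ 3 / 6) := by nlinarith [sq_nonneg S]
      _ ≤ 384 * π ^ 2 * Real.exp S := by gcongr
  rcases le_or_gt (4 * t ^ 2 * d) (3 * π ^ 2) with hsmall | hbig
  · have hquadratic : t ^ 2 / (3 * π ^ 2) ≤ S := by
      rw [div_le_div_iff₀ (by positivity) (by positivity)]
      nlinarith [sq_nonneg t]
    rw [div_le_iff₀' (by positivity)] at hquadratic
    nlinarith [pow_nonneg hS 3]
  · have hinv : 1 / (4 * d) ≤ S := by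
      rw [div_le_div_iff₀ (by positivity) (by positivity)]
      nlinarith
    calc t ^ 2 ≤ π ^ 2 / d ^ 3 := (le_div_iff₀ (by positivity)).2 ht
      _ = 64 * π ^ 2 * (1 / (4 * d)) ^ 3 := by field_simp; norm_num
      _ ≤ 64 * π ^ 2 * S ^ 3 := by gcongr
      _ ≤ 384 * π ^ 2 * (S + S ^ 3 / 6) := by nlinarith [mul_nonneg (sq_nonneg π) hS]

theorem norm_exp_saddleExponent_le {t w : ℝ} (hd : 0 < d) (hd₁ : d ≤ 1) (hw : w ^ 2 = d ^ 3)
    (ht : |t * w| ≤ π) :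
    ‖Complex.exp (saddleExponent d (t * w))‖ ≤ 384 * π ^ 2 * (1 + t ^ 2)⁻¹ := by
  have hscaled : 2 * (t * w) ^ 2 / (d * (3 * π ^ 2 * d ^ 2 + 4 * (t * w) ^ 2)) =
      2 * t ^ 2 / (3 * π ^ 2 + 4 * t ^ 2 * d) := by
    rw [mul_pow, hw]
    field_simp
  have ht' : t ^ 2 * d ^ 3 ≤ π ^ 2 := by
    rw [← hw, ← mul_pow, ← sq_abs]
    gcongr
  have hre := re_saddleExponent_le_neg_div hd hd₁ ht
  rw [hscaled] at hre
  calc ‖Complex.exp (saddleExponent d (t * w))‖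
      ≤ Real.exp (-(2 * t ^ 2 / (3 * π ^ 2 + 4 * t ^ 2 * d))) := by
        rw [Complex.norm_exp]
        exact Real.exp_le_exp.2 hre
    _ ≤ 384 * π ^ 2 * (1 + t ^ 2)⁻¹ := by
        rw [Real.exp_neg, ← div_eq_mul_inv, inv_le_iff_one_le_mul₀ (Real.exp_pos _),
          div_mul_eq_mul_div, one_le_div (by positivity)]
        exact one_add_sq_le_exp_div hd ht'

end SaddleExponent

section RescaledIntegral

open MeasureTheory

variable {ι : Type*} {l : Filter ι} [l.IsCountablyGenerated]

theorem tendsto_inv_smul_setIntegral_Icc {E : Type*} [NormedAddCommGroup E] [NormedSpace ℝ E]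
    {w η : ι → ℝ} {F : ι → ℝ → E} {G : ℝ → E} {bound : ℝ → ℝ} (hw : ∀ᶠ i in l, 0 < w i)
    (hη : Tendsto (fun i ↦ η i / w i) l atTop) (hF : ∀ᶠ i in l, StronglyMeasurable (F i))
    (hF_le : ∀ᶠ i in l, ∀ t, |t * w i| ≤ η i → ‖F i (t * w i)‖ ≤ bound t)
    (hbound : Integrable bound) (hG : ∀ t, Tendsto (fun i ↦ F i (t * w i)) l (𝓝 (G t))) :
    Tendsto (fun i ↦ (w i)⁻¹ • ∫ θ in Set.Icc (-η i) (η i), F i θ) l (𝓝 (∫ t, G t)) := by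
  let window (i : ι) : ℝ → E := (Set.Icc (-η i) (η i)).indicator (F i)
  have hwindow : Tendsto (fun i ↦ ∫ t, window i (t * w i)) l (𝓝 (∫ t, G t)) := by
    refine tendsto_integral_filter_of_dominated_convergence (fun t ↦ ‖bound t‖) ?_ ?_
      hbound.norm (.of_forall fun t ↦ ?_)
    · filter_upwards [hF] with i hi
      exact ((hi.indicator measurableSet_Icc).comp_measurable
        (measurable_id.mul_const (w i))).aestronglyMeasurable
    · filter_upwards [hF_le] with i hi
      refine .of_forall fun t ↦ ?_
      by_cases ht : t * w i ∈ Set.Icc (-η i) (η i)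
      · simpa [window, ht] using (hi t (abs_le.2 ht)).trans (le_abs_self _)
      · simp [window, ht]
    · refine (hG t).congr' ?_
      filter_upwards [hw, hη.eventually_ge_atTop |t|] with i hi ht
      rw [le_div_iff₀ hi] at ht
      have hmem : t * w i ∈ Set.Icc (-η i) (η i) := abs_le.1 (by rwa [abs_mul, abs_of_pos hi])
      exact (Set.indicator_of_mem hmem _).symm
  refine hwindow.congr' ?_
  filter_upwards [hw] with i hi
  rw [Measure.integral_comp_mul_right, integral_indicator measurableSet_Icc,
    abs_of_pos (inv_pos.2 hi)]

end RescaledIntegral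

section SaddleLimit

variable {d : ℝ}

lemma tendsto_sqrt_nhdsGT_zero : Tendsto Real.sqrt (𝓝[>] 0) (𝓝 0) :=
  tendsto_nhdsWithin_of_tendsto_nhds (Real.continuous_sqrt.tendsto' 0 0 Real.sqrt_zero)

lemma mul_sqrt_sq (hd : 0 ≤ d) : (d * √d) ^ 2 = d ^ 3 := by
  rw [mul_pow, Real.sq_sqrt hd]
  ring

lemma tsum_one_div_succ_sq : ∑' k : ℕ, 1 / (k + 1 : ℝ) ^ 2 = π ^ 2 / 6 := by
  simpa using ((hasSum_nat_add_iff' 1).2 hasSum_zeta_two).tsum_eq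

lemma tendsto_saddleExponent (t : ℝ) :
    Tendsto (fun d ↦ saddleExponent d (t * (d * √d))) (𝓝[>] 0)
      (𝓝 (-(π ^ 2 / 6) * t ^ 2 : ℝ)) := by
  have hquadratic : Tendsto (fun d ↦ (t * (d * √d)) ^ 2 / 2 * sigmaMoment 1 1 d) (𝓝[>] 0)
      (𝓝 (π ^ 2 / 6 * t ^ 2)) := by
    have h := (tendsto_pow_mul_sigmaMoment one_ne_zero 1).const_mul (t ^ 2 / 2)
    rw [one_add_one_eq_two, tsum_one_div_succ_sq, Nat.factorial_two, Nat.cast_two,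
      show t ^ 2 / 2 * (2 * (π ^ 2 / 6)) = π ^ 2 / 6 * t ^ 2 by ring] at h
    refine h.congr' ?_
    filter_upwards [self_mem_nhdsWithin] with d (hd : 0 < d)
    rw [mul_pow, mul_sqrt_sq hd.le]
    ring
  have hcubic : Tendsto (fun d ↦ 4 * |t * (d * √d)| ^ 3 * sigmaMoment 1 2 d) (𝓝[>] 0)
      (𝓝 0) := by
    have h := (tendsto_sqrt_nhdsGT_zero.mul (tendsto_pow_mul_sigmaMoment one_ne_zero 2)).const_mul
      (4 * |t| ^ 3)
    rw [zero_mul, mul_zero] at h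
    refine h.congr' ?_
    filter_upwards [self_mem_nhdsWithin] with d (hd : 0 < d)
    rw [abs_mul t, abs_of_pos (by positivity : 0 < d * √d), mul_pow, pow_succ (d * √d) 2,
      mul_sqrt_sq hd.le]
    ring
  have herror : Tendsto (fun d ↦ saddleExponent d (t * (d * √d)) +
      ((t * (d * √d)) ^ 2 / 2 * sigmaMoment 1 1 d : ℝ)) (𝓝[>] 0) (𝓝 0) := by
    refine squeeze_zero_norm' ?_ hcubic
    filter_upwards [self_mem_nhdsWithin] with d hd using norm_saddleExponent_add_le hd _
  simpa using herror.sub ((Complex.continuous_ofReal.tendsto _).comp hquadratic)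

lemma tendsto_pow_mul_FC_circlePoint {m : ℕ} (hm : m ≠ 0) (t : ℝ) :
    Tendsto (fun d : ℝ ↦ (d : ℂ) ^ (m + 1) * FC m (circlePoint d (t * (d * √d)))) (𝓝[>] 0)
      (𝓝 (m ! * ∑' k : ℕ, 1 / (k + 1 : ℝ) ^ (m + 1) : ℝ)) := by
  have hmain : Tendsto (fun d : ℝ ↦ ((d ^ (m + 1) * sigmaMoment m 0 d : ℝ) : ℂ)) (𝓝[>] 0)
      (𝓝 (m ! * ∑' k : ℕ, 1 / (k + 1 : ℝ) ^ (m + 1) : ℝ)) :=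
    (Complex.continuous_ofReal.tendsto _).comp (tendsto_pow_mul_sigmaMoment hm 0)
  have hbound : Tendsto (fun d ↦ d ^ (m + 1) * (|t * (d * √d)| * sigmaMoment m 1 d)) (𝓝[>] 0)
      (𝓝 0) := by
    have h := (tendsto_sqrt_nhdsGT_zero.mul (tendsto_pow_mul_sigmaMoment hm 1)).const_mul |t|
    rw [zero_mul, mul_zero] at h
    refine h.congr' ?_
    filter_upwards [self_mem_nhdsWithin] with d (hd : 0 < d)
    rw [abs_mul t, abs_of_pos (by positivity : 0 < d * √d)]
    ring
  have herror : Tendsto (fun d : ℝ ↦ (d : ℂ) ^ (m + 1) *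
      (FC m (circlePoint d (t * (d * √d))) - sigmaMoment m 0 d)) (𝓝[>] 0) (𝓝 0) := by
    refine squeeze_zero_norm' ?_ hbound
    filter_upwards [self_mem_nhdsWithin] with d (hd : 0 < d)
    rw [norm_mul, norm_pow, Complex.norm_real, Real.norm_of_nonneg hd.le]
    gcongr
    exact norm_FC_circlePoint_sub_le m hd _
  refine (zero_add (_ : ℂ) ▸ herror.add hmain).congr fun d ↦ ?_
  push_cast
  ring

lemma gC_circlePoint_ne_zero (hd : 0 < d) (θ : ℝ) : gC (circlePoint d θ) ≠ 0 := by
  rw [gC_eq_exp_eulerLog (norm_circlePoint_lt_one hd θ)]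
  exact Complex.exp_ne_zero _

lemma continuous_exp_saddleExponent (hd : 0 < d) :
    Continuous fun θ ↦ Complex.exp (saddleExponent d θ) := by
  have hquotient (θ : ℝ) : Complex.exp (saddleExponent d θ) =
      gC (circlePoint d θ) * Complex.exp (-(θ * aFun d) * Complex.I) / gC (circlePoint d 0) := by
    rw [gC_circlePoint_mul_exp hd, mul_div_cancel_left₀ _ (gC_circlePoint_ne_zero hd 0)]
  have hgC := continuous_gC_circlePoint hd
  simp only [hquotient]
  fun_prop

theorem tendsto_setIntegral_exp_saddleExponent_mul {ι : Type*} {l : Filter ι}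
    [l.IsCountablyGenerated] {d η : ι → ℝ} {f : ι → ℝ → ℂ} {B : ℝ} {L : ℂ}
    (hd : Tendsto d l (𝓝[>] 0)) (hηπ : ∀ᶠ i in l, η i ≤ π)
    (hη : Tendsto (fun i ↦ η i / (d i * √(d i))) l atTop) (hf : ∀ᶠ i in l, Continuous (f i))
    (hB : ∀ᶠ i in l, ∀ θ, ‖f i θ‖ ≤ B)
    (hL : ∀ t, Tendsto (fun i ↦ f i (t * (d i * √(d i)))) l (𝓝 L)) :
    Tendsto (fun i ↦ (d i * √(d i))⁻¹ • ∫ θ in Set.Icc (-η i) (η i),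
      Complex.exp (saddleExponent (d i) θ) * f i θ) l (𝓝 (√(π / (π ^ 2 / 6)) * L)) := by
  have hd_pos : ∀ᶠ i in l, 0 < d i := (tendsto_nhdsWithin_iff.1 hd).2
  have hd_le : ∀ᶠ i in l, d i ≤ 1 :=
    (tendsto_nhdsWithin_iff.1 hd).1.eventually_le_const zero_lt_one
  have hgauss : ∫ t : ℝ, ((Real.exp (-(π ^ 2 / 6) * t ^ 2) : ℝ) : ℂ) * L =
      √(π / (π ^ 2 / 6)) * L := by
    rw [MeasureTheory.integral_mul_const, integral_complex_ofReal, integral_gaussian]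
  rw [← hgauss]
  refine tendsto_inv_smul_setIntegral_Icc (bound := fun t ↦ 384 * π ^ 2 * (1 + t ^ 2)⁻¹ * B)
    (by filter_upwards [hd_pos] with i hi; positivity) hη ?_ ?_
    ((integrable_inv_one_add_sq.const_mul _).mul_const B) fun t ↦ ?_
  · filter_upwards [hd_pos, hf] with i hi hfi
    exact ((continuous_exp_saddleExponent hi).mul hfi).stronglyMeasurable
  · filter_upwards [hd_pos, hd_le, hηπ, hB] with i hi hi₁ hηi hBi t ht
    rw [norm_mul]
    exact mul_le_mul (norm_exp_saddleExponent_le hi hi₁ (mul_sqrt_sq hi.le) (ht.trans hηi)) (hBi _)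
      (norm_nonneg _) (by positivity)
  · rw [Complex.ofReal_exp]
    exact ((tendsto_saddleExponent t).comp hd).cexp.mul (hL t)

end SaddleLimit

/-- `d n` is, for every `n ≥ 1`, the radial saddle point of order `n`: `n` is the mean
size of a Boltzmann random partition of parameter `e ^ (-d n)`. -/
def IsSaddleSequence (d : ℕ → ℝ) : Prop :=
  ∀ n : ℕ, 0 < n → 0 < d n ∧ aFun (d n) = n

namespace IsSaddleSequence

variable {d : ℕ → ℝ}

lemma eventually_pos (hd : IsSaddleSequence d) : ∀ᶠ n in atTop, 0 < d n := by
  filter_upwards [eventually_gt_atTop 0] with n hn using (hd n hn).1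

lemma tendsto_nhdsGT_zero (hd : IsSaddleSequence d) : Tendsto d atTop (𝓝[>] 0) := by
  refine tendsto_nhdsWithin_iff.2 ⟨tendsto_order.2 ⟨fun a ha ↦ ?_, fun ε hε ↦ ?_⟩,
    hd.eventually_pos⟩
  · filter_upwards [hd.eventually_pos] with n hn using ha.trans hn
  · filter_upwards [eventually_gt_atTop 0,
      tendsto_natCast_atTop_atTop.eventually_gt_atTop (sigmaMoment 1 0 ε)] with n hn hlarge
    obtain ⟨hdn, hsaddle⟩ := hd n hn
    rw [← hsaddle, aFun_eq_sigmaMoment hdn] at hlarge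
    exact lt_of_not_ge fun hge ↦ hlarge.not_ge (sigmaMoment_antitoneOn 1 0 hε hdn hge)

lemma tendsto_natCast_mul_sq (hd : IsSaddleSequence d) :
    Tendsto (fun n : ℕ ↦ n * d n ^ 2) atTop (𝓝 (π ^ 2 / 6)) := by
  have h := (tendsto_pow_mul_sigmaMoment one_ne_zero 0).comp hd.tendsto_nhdsGT_zero
  rw [add_zero, one_add_one_eq_two, tsum_one_div_succ_sq, Nat.factorial_one, Nat.cast_one,
    one_mul] at h
  refine h.congr' ?_
  filter_upwards [eventually_gt_atTop 0] with n hn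
  obtain ⟨hdn, hsaddle⟩ := hd n hn
  rw [Function.comp_apply, ← aFun_eq_sigmaMoment hdn, hsaddle, mul_comm]

lemma isEquivalent_inv_pow (hd : IsSaddleSequence d) (k : ℕ) :
    (fun n ↦ ((d n : ℂ) ^ k)⁻¹) ~[atTop]
      fun n ↦ (((6 * n / π ^ 2) ^ ((k : ℝ) / 2) : ℝ) : ℂ) := by
  have hone : Tendsto (fun n : ℕ ↦ (6 * n / π ^ 2 * d n ^ 2) ^ (k / 2 : ℝ)) atTop (𝓝 1) := by
    have h := (hd.tendsto_natCast_mul_sq.const_mul (6 / π ^ 2)).rpow_const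
      (p := (k / 2 : ℝ)) (.inr (by positivity))
    rw [show 6 / π ^ 2 * (π ^ 2 / 6) = 1 by field_simp, Real.one_rpow] at h
    exact h.congr fun n ↦ by congr 1; ring
  refine (isEquivalent_of_tendsto_one ?_).symm
  refine ((Complex.continuous_ofReal.tendsto' 1 1 Complex.ofReal_one).comp hone).congr' ?_
  filter_upwards [hd.eventually_pos] with n hn
  have hpow : (d n ^ 2) ^ (k / 2 : ℝ) = d n ^ k := by
    rw [← Real.rpow_natCast_mul hn.le, Nat.cast_two, mul_div_cancel₀ _ two_ne_zero,
      Real.rpow_natCast]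
  rw [Function.comp_apply, Real.mul_rpow (by positivity) (by positivity), hpow]
  simp

lemma tendsto_log_mul_rpow (hd : IsSaddleSequence d) {r : ℝ} (hr : 0 < r) :
    Tendsto (fun n : ℕ ↦ Real.log n * d n ^ r) atTop (𝓝 0) := by
  have hlog : Tendsto (fun n : ℕ ↦ Real.log n / (n : ℝ) ^ (r / 2)) atTop (𝓝 0) :=
    (isLittleO_log_rpow_atTop (half_pos hr)).tendsto_div_nhds_zero.comp
      tendsto_natCast_atTop_atTop
  have h := hlog.mul (hd.tendsto_natCast_mul_sq.rpow_const (p := r / 2) (.inr (by positivity)))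
  rw [zero_mul] at h
  refine h.congr' ?_
  filter_upwards [hd.eventually_pos, eventually_gt_atTop 0] with n hdn hn
  have hpow : (d n ^ 2) ^ (r / 2) = d n ^ r := by
    rw [← Real.rpow_natCast_mul hdn.le, Nat.cast_two, mul_div_cancel₀ _ two_ne_zero]
  rw [Real.mul_rpow (by positivity) (by positivity), hpow]
  field_simp

lemma tendsto_window_atTop (hd : IsSaddleSequence d) :
    Tendsto (fun n : ℕ ↦ d n ^ (4 / 3 : ℝ) / Real.log n / (d n * √(d n))) atTop atTop := by
  have hpos : ∀ᶠ n : ℕ in atTop, 0 < Real.log n * d n ^ (1 / 6 : ℝ) := by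
    filter_upwards [hd.eventually_pos, eventually_gt_atTop 1] with n hdn hn
    have hlog : 0 < Real.log n := Real.log_pos (mod_cast hn)
    positivity
  refine (tendsto_nhdsWithin_iff.2
    ⟨hd.tendsto_log_mul_rpow (by norm_num), hpos⟩).inv_tendsto_nhdsGT_zero.congr' ?_
  filter_upwards [hd.eventually_pos] with n hdn
  have hscale : d n * √(d n) = d n ^ (4 / 3 : ℝ) * d n ^ (1 / 6 : ℝ) := by
    rw [Real.sqrt_eq_rpow, ← Real.rpow_add hdn, ← Real.rpow_one_add' hdn.le (by norm_num)]
    norm_num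
  have hne : d n ^ (4 / 3 : ℝ) ≠ 0 := by positivity
  rw [Pi.inv_apply, hscale, div_div, mul_left_comm, div_mul_cancel_left₀ hne]

lemma eventually_window_le_pi (hd : IsSaddleSequence d) :
    ∀ᶠ n : ℕ in atTop, d n ^ (4 / 3 : ℝ) / Real.log n ≤ π := by
  have hd_le := (tendsto_nhdsWithin_iff.1 hd.tendsto_nhdsGT_zero).1.eventually_le_const zero_lt_one
  have hlog := (Real.tendsto_log_atTop.comp tendsto_natCast_atTop_atTop).eventually_ge_atTop 1
  filter_upwards [hd.eventually_pos, hd_le, hlog] with n hdn hdn₁ hlog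
  calc d n ^ (4 / 3 : ℝ) / Real.log n ≤ 1 / 1 := by
        gcongr
        · exact Real.rpow_le_one hdn.le hdn₁ (by norm_num)
        · exact hlog
    _ ≤ π := by linarith [Real.pi_gt_three]

lemma tendsto_pi_div_atTop (hd : IsSaddleSequence d) :
    Tendsto (fun n ↦ π / (d n * √(d n))) atTop atTop := by
  have hzero : Tendsto (fun n ↦ d n * √(d n)) atTop (𝓝[>] 0) := by
    refine tendsto_nhdsWithin_iff.2 ⟨?_, ?_⟩
    · simpa using (tendsto_nhdsWithin_iff.1 hd.tendsto_nhdsGT_zero).1.mul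
        (tendsto_sqrt_nhdsGT_zero.comp hd.tendsto_nhdsGT_zero)
    · filter_upwards [hd.eventually_pos] with n hn
      exact mul_pos hn (Real.sqrt_pos.2 hn)
  exact hzero.inv_tendsto_nhdsGT_zero.const_mul_atTop Real.pi_pos

end IsSaddleSequence

/-- The Laplace approximation `(e ^ (n d) / 2π) · g(e ^ (-d)) · d ^ (3/2) · √(π / ζ(2))` of the
`n`-th Cauchy integral of `gC` along the circle of radius `e ^ (-d)`. -/
noncomputable def saddleApprox (d : ℝ) (n : ℕ) : ℂ :=
  ((Real.exp (n * d) / (2 * π) : ℝ) : ℂ) * gC (circlePoint d 0) *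
    ((d * √d * √(π / (π ^ 2 / 6)) : ℝ) : ℂ)

namespace IsSaddleSequence

variable {d : ℕ → ℝ}

theorem isEquivalent_setIntegral (hd : IsSaddleSequence d) {η : ℕ → ℝ} {f : ℕ → ℝ → ℂ} {B : ℝ}
    {L : ℂ} (hηπ : ∀ᶠ n in atTop, η n ≤ π)
    (hη : Tendsto (fun n ↦ η n / (d n * √(d n))) atTop atTop)
    (hf : ∀ᶠ n in atTop, Continuous (f n)) (hB : ∀ᶠ n in atTop, ∀ θ, ‖f n θ‖ ≤ B) (hL₀ : L ≠ 0)
    (hL : ∀ t, Tendsto (fun n ↦ f n (t * (d n * √(d n)))) atTop (𝓝 L)) :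
    (fun n : ℕ ↦ ((Real.exp (n * d n) / (2 * π) : ℝ) : ℂ) * ∫ θ in Set.Icc (-η n) (η n),
      gC (circlePoint (d n) θ) * f n θ * Complex.exp (-(θ * n) * Complex.I)) ~[atTop]
      fun n ↦ saddleApprox (d n) n * L := by
  have hconst : (√(π / (π ^ 2 / 6)) : ℂ) * L ≠ 0 :=
    mul_ne_zero (Complex.ofReal_ne_zero.2 (by positivity)) hL₀
  have hintegral := (isEquivalent_const_iff_tendsto hconst).2
    (tendsto_setIntegral_exp_saddleExponent_mul hd.tendsto_nhdsGT_zero hηπ hη hf hB hL)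
  have hprefactor : (fun n : ℕ ↦ ((Real.exp (n * d n) / (2 * π) : ℝ) : ℂ) *
      gC (circlePoint (d n) 0) * ((d n * √(d n) : ℝ) : ℂ)) ~[atTop] _ := .refl
  refine ((hprefactor.mul hintegral).congr_left ?_).congr_right (.of_forall fun n ↦ ?_)
  · filter_upwards [eventually_gt_atTop 0] with n hn
    obtain ⟨hdn, hsaddle⟩ := hd n hn
    have hne : ((d n * √(d n) : ℝ) : ℂ) ≠ 0 := Complex.ofReal_ne_zero.2 (by positivity)
    have hintegrand (θ : ℝ) : gC (circlePoint (d n) θ) * f n θ *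
        Complex.exp (-(θ * n) * Complex.I) =
        gC (circlePoint (d n) 0) * (Complex.exp (saddleExponent (d n) θ) * f n θ) := by
      rw [← mul_assoc, ← gC_circlePoint_mul_exp hdn, hsaddle, Complex.ofReal_natCast,
        mul_right_comm]
    simp only [hintegrand, Pi.mul_apply]
    rw [MeasureTheory.integral_const_mul, Complex.real_smul, Complex.ofReal_inv, mul_assoc,
      mul_inv_cancel_left₀ hne, mul_assoc]
  · simp only [Pi.mul_apply, Function.const_apply, saddleApprox, Complex.ofReal_mul]
    ring

theorem isEquivalent_card_partition (hd : IsSaddleSequence d) :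
    (fun n : ℕ ↦ (Fintype.card n.Partition : ℂ)) ~[atTop] fun n ↦ saddleApprox (d n) n := by
  have h := hd.isEquivalent_setIntegral (η := fun _ ↦ π) (f := fun _ _ ↦ 1) (B := 1)
    (.of_forall fun _ ↦ le_rfl) hd.tendsto_pi_div_atTop (.of_forall fun _ ↦ continuous_const)
    (by simp) one_ne_zero fun _ ↦ tendsto_const_nhds
  simp only [mul_one] at h
  refine h.congr_left ?_
  filter_upwards [hd.eventually_pos] with n hn
  have hexp : (Real.exp (-d n) : ℂ) ^ n = ((Real.exp (n * d n) : ℝ) : ℂ)⁻¹ := by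
    rw [← Complex.ofReal_pow, ← Real.exp_nat_mul, mul_neg, Real.exp_neg, Complex.ofReal_inv]
  rw [MeasureTheory.integral_Icc_eq_integral_Ioc,
    ← intervalIntegral.integral_of_le (by linarith [Real.pi_pos]),
    integral_gC_circlePoint_mul_exp hn, hexp]
  have hpi : (π : ℂ) ≠ 0 := Complex.ofReal_ne_zero.2 Real.pi_ne_zero
  have hne : ((Real.exp (n * d n) : ℝ) : ℂ) ≠ 0 := Complex.ofReal_ne_zero.2 (Real.exp_ne_zero _)
  push_cast at hne ⊢
  field_simp

theorem isEquivalent_setIntegral_FC (hd : IsSaddleSequence d) {m : ℕ} (hm : m ≠ 0) {η : ℕ → ℝ}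
    (hηπ : ∀ᶠ n in atTop, η n ≤ π) (hη : Tendsto (fun n ↦ η n / (d n * √(d n))) atTop atTop) :
    (fun n : ℕ ↦ ((Real.exp (n * d n) / (2 * π) : ℝ) : ℂ) * ∫ θ in Set.Icc (-η n) (η n),
      gC (circlePoint (d n) θ) * FC m (circlePoint (d n) θ) *
        Complex.exp (-(θ * n) * Complex.I)) ~[atTop]
      fun n ↦ ((d n : ℂ) ^ (m + 1))⁻¹ * (saddleApprox (d n) n *
        (m ! * ∑' j : ℕ, 1 / (j + 1 : ℝ) ^ (m + 1) : ℝ)) := by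
  set L : ℝ := m ! * ∑' j : ℕ, 1 / (j + 1 : ℝ) ^ (m + 1)
  have hL_pos : 0 < L := mul_pos (by positivity)
    ((summable_one_div_succ_pow hm).tsum_pos (fun _ ↦ by positivity) 0 (by simp))
  have hL : Tendsto (fun s ↦ s ^ (m + 1) * sigmaMoment m 0 s) (𝓝[>] 0) (𝓝 L) :=
    tendsto_pow_mul_sigmaMoment hm 0
  have hB : ∀ᶠ n in atTop, ∀ θ,
      ‖(d n : ℂ) ^ (m + 1) * FC m (circlePoint (d n) θ)‖ ≤ L + 1 := by
    filter_upwards [hd.eventually_pos, (hL.comp hd.tendsto_nhdsGT_zero).eventually_le_const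
      (lt_add_one L)] with n hn hle θ
    rw [norm_mul, norm_pow, Complex.norm_real, Real.norm_of_nonneg hn.le]
    exact (mul_le_mul_of_nonneg_left (norm_FC_circlePoint_le m hn θ) (by positivity)).trans hle
  have hcont : ∀ᶠ n in atTop,
      Continuous fun θ ↦ (d n : ℂ) ^ (m + 1) * FC m (circlePoint (d n) θ) := by
    filter_upwards [hd.eventually_pos] with n hn
      using continuous_const.mul (continuous_FC_circlePoint m hn)
  have hscaled := hd.isEquivalent_setIntegral hηπ hη hcont hB
    (Complex.ofReal_ne_zero.2 hL_pos.ne')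
    fun t ↦ (tendsto_pow_mul_FC_circlePoint hm t).comp hd.tendsto_nhdsGT_zero
  refine ((IsEquivalent.refl (u := fun n ↦ ((d n : ℂ) ^ (m + 1))⁻¹)).mul hscaled).congr_left ?_
  filter_upwards [hd.eventually_pos] with n hn
  have hne : (d n : ℂ) ^ (m + 1) ≠ 0 := pow_ne_zero _ (Complex.ofReal_ne_zero.2 hn.ne')
  simp only [Pi.mul_apply, mul_left_comm (gC _), mul_assoc ((d n : ℂ) ^ (m + 1))]
  rw [MeasureTheory.integral_const_mul, mul_left_comm, inv_mul_cancel_left₀ hne]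

end IsSaddleSequence

/-- **Asymptotics of the central integral** (formula (33) of the paper): for fixed `m ≥ 1`,
with `d_n` solving `Σ_{j≥1} j·e^{−jd}/(1 − e^{−jd}) = n` and `δ_n = d_n^{4/3}/log n`,
`J₁(m,n) = (e^{n d_n}/(2π))·∫_{−δ_n}^{δ_n} g(e^{−d_n+iθ})·F_m(e^{−d_n+iθ})·e^{−iθn} dθ`
satisfies `J₁(m,n) ∼ p(n)·(n/ζ(2))^{(m+1)/2}·m!·ζ(m+1)` as `n → ∞`, with `ζ(2) = π²/6`. -/
theorem central_integral_asymptotics (m : ℕ) (hm : 1 ≤ m) (d : ℕ → ℝ)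
    (hd : ∀ n : ℕ, 0 < n → 0 < d n ∧ aFun (d n) = n) :
    Asymptotics.IsEquivalent atTop
      (fun n : ℕ =>
        ((Real.exp (n * d n) / (2 * Real.pi) : ℝ) : ℂ) *
          ∫ θ in
            Set.Icc (-(d n ^ ((4 : ℝ) / 3) / Real.log n)) (d n ^ ((4 : ℝ) / 3) / Real.log n),
            gC (Complex.exp (-(d n : ℂ) + θ * Complex.I)) *
              FC m (Complex.exp (-(d n : ℂ) + θ * Complex.I)) *
              Complex.exp (-(θ * n) * Complex.I))
      (fun n : ℕ =>
        (((Fintype.card (Nat.Partition n) : ℝ) *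
            (6 * n / Real.pi ^ 2) ^ (((m : ℝ) + 1) / 2) *
            (m.factorial : ℝ) * ∑' j : ℕ, (1 : ℝ) / (j + 1) ^ (m + 1) : ℝ) : ℂ)) := by
  have hsaddle : IsSaddleSequence d := hd
  have hintegral := hsaddle.isEquivalent_setIntegral_FC (Nat.one_le_iff_ne_zero.1 hm)
    hsaddle.eventually_window_le_pi hsaddle.tendsto_window_atTop
  have hproduct := (hsaddle.isEquivalent_inv_pow (m + 1)).mul
    (hsaddle.isEquivalent_card_partition.symm.mul (IsEquivalent.refl
      (u := fun _ ↦ ((m ! * ∑' j : ℕ, 1 / (j + 1 : ℝ) ^ (m + 1) : ℝ) : ℂ))))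
  refine (hintegral.trans hproduct).congr_right (.of_forall fun n ↦ ?_)
  simp only [Pi.mul_apply]
  push_cast
  ring
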